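/- Let G be a finite abelian group and G₀ ≤ G. Write S = O_K[G], R = O_K[G₀] for a number field K. Under the identification S ⊗_R S ≅ O_K[G^{(2)}] with G^{(2)} = (G×G)/{(z,z⁻¹): z ∈ G₀}, and assuming K totally real and |G| odd, the induction map Pic(O_K[G₀])⁻ → Pic(O_K[G])⁻ on odd minus parts (with respect to the inversion involution j) is injective. -/

import Mathlib

open NumberField

set_option synthInstance.maxHeartbeats 800000
set_option maxHeartbeats 1600000

/-- A number field is totally real if every complex embedding has real image. -/
def IsTotallyRealNF (K : Type*) [Field K] [NumberField K] : Prop :=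
  ∀ φ : K →+* ℂ, ∀ x : K, (φ x).im = 0

/-- The twist of a module by a ring endomorphism of the base. -/
def Twist {R : Type*} [CommRing R] (j : R →+* R) (X : Type*) [AddCommGroup X]
    [Module R X] : Type _ := X

instance {R : Type*} [CommRing R] (j : R →+* R) (X : Type*) [AddCommGroup X]
    [Module R X] : AddCommGroup (Twist j X) := inferInstanceAs (AddCommGroup X)

noncomputable instance {R : Type*} [CommRing R] (j : R →+* R) (X : Type*)
    [AddCommGroup X] [Module R X] : Module R (Twist j X) := Module.compHom X j

/-!
An invertible `R`-submodule `I` of `S` has a unit of `S ⊗ S` attached to it, its Amitsur cocycle: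
the unique `u` with `u * (1 ⊗ s) = s ⊗ 1` for all `s ∈ I`. It determines `I` by descent, and the
cocycle of a principal submodule is a coboundary. If `X` becomes free over `S` then `X ≅ I` for such
an `I`, and `Twist j X ≅ j I`. The cocycle of `I / j I` has the form `w = u / j u`, so
`w * j w = 1`.

For group rings `S ⊗ S` is again a group ring, and the coefficient of `w * j w` at the identity is
the sum of the squares of the coefficients of `w`. In a totally real ring of integers `1` is not a
sum of two or more nonzero squares, so `w` is a monomial. Since multiplication `S ⊗ S → S` sends `w`
to `1`, it is the coboundary of an element of `G`. Hence `I / j I` is principal, `[X] = j [X]`, and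
`[X] ^ 2 = 1` as `X` is in the minus part. A class of odd order whose square is trivial is trivial.
-/

open CommRing NumberField.InfinitePlace

section SumsOfSquares

/-- `1` is indecomposable as a sum of squares in `A`: a sum of squares equal to `1` has at most one
nonzero term. The terms beyond the two being compared are collected in `s`. -/
def SumSqIndecomposableOne (A : Type*) [Semiring A] : Prop :=
  ∀ a b s : A, IsSumSq s → a * a + b * b + s = 1 → a = 0 ∨ b = 0

lemma SumSqIndecomposableOne.eq_zero_or_eq_zero {A : Type*} [CommSemiring A]
    (hA : SumSqIndecomposableOne A) {ι : Type*} {t : Finset ι} {x : ι → A}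
    (hx : ∑ i ∈ t, x i * x i = 1) {i j : ι} (hi : i ∈ t) (hj : j ∈ t) (hij : i ≠ j) :
    x i = 0 ∨ x j = 0 := by
  classical
  refine hA (x i) (x j) (∑ k ∈ (t.erase i).erase j, x k * x k) (.sum_mul_self _ _) ?_
  rw [add_assoc, Finset.add_sum_erase _ (fun k => x k * x k) (Finset.mem_erase.mpr ⟨hij.symm, hj⟩),
    Finset.add_sum_erase _ (fun k => x k * x k) hi, hx]

lemma isSumSq_map {A B : Type*} [Semiring A] [Semiring B] (f : A →+* B) {s : A} (hs : IsSumSq s) :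
    IsSumSq (f s) := by
  induction hs with
  | zero => simp
  | sq_add a _ ih => simpa only [map_add, map_mul] using ih.sq_add (f a)

lemma isTotallyReal_of_isTotallyRealNF {K : Type*} [Field K] [NumberField K]
    (hK : IsTotallyRealNF K) : IsTotallyReal K where
  isReal v := isReal_iff.mpr <| RingHom.ext fun x => Complex.conj_eq_iff_im.mpr (hK v.embedding x)

/-- A term `a` of such a sum has absolute value less than `1` at every place once another term is
nonzero, which is impossible for a nonzero algebraic integer. -/
lemma sumSqIndecomposableOne_ringOfIntegers (K : Type*) [Field K] [NumberField K]
    [IsTotallyReal K] : SumSqIndecomposableOne (𝓞 K) := by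
  intro a b s hs hsum
  by_contra! ⟨ha, hb⟩
  have apply_lt_one (v : InfinitePlace K) : v a < 1 := by
    have hv := IsTotallyReal.isReal v
    let σ : 𝓞 K →+* ℝ := (embedding_of_isReal hv).comp (algebraMap (𝓞 K) K)
    have hσb : 0 < σ b * σ b := mul_self_pos.mpr <|
      (map_ne_zero (embedding_of_isReal hv)).mpr (RingOfIntegers.coe_ne_zero_iff.mpr hb)
    have hσs : 0 ≤ σ s := (isSumSq_map σ hs).nonneg
    have hσ : σ a * σ a + σ b * σ b + σ s = 1 := by simp only [← map_mul, ← map_add, hsum, map_one]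
    rw [← norm_embedding_of_isReal hv, Real.norm_eq_abs, ← sq_lt_one_iff_abs_lt_one, sq]
    change σ a * σ a < 1
    linarith
  obtain ⟨v⟩ : Nonempty (InfinitePlace K) := inferInstance
  exact (one_le_of_lt_one (w := v) ha fun z _ => apply_lt_one z).not_gt (apply_lt_one v)

end SumsOfSquares

section AmitsurCocycle

variable {R S T : Type*} [CommRing R] [CommRing S] [CommRing T] [Algebra R S]

lemma eq_of_forall_mem_mul_eq (φ : S →+* T) (I : (Submodule R S)ˣ) {u v : T}
    (huv : ∀ s ∈ (I : Submodule R S), u * φ s = v * φ s) : u = v := by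
  have one_mem : (1 : S) ∈ (I * I⁻¹ : Submodule R S) := I.mul_inv ▸ Submodule.one_le.mp le_rfl
  suffices u * φ 1 = v * φ 1 by simpa using this
  refine Submodule.mul_induction_on (C := fun z => u * φ z = v * φ z) one_mem
    (fun a ha b _ => ?_) (fun x y hx hy => ?_)
  · rw [map_mul, ← mul_assoc, huv a ha, mul_assoc]
  · rw [map_add, mul_add, hx, hy, mul_add]

variable {α β : S →+* T} (h : α.comp (algebraMap R S) = β.comp (algebraMap R S))

include h in
lemma map_eq_map_of_mem_one {s : S} (hs : s ∈ (1 : Submodule R S)) : α s = β s := by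
  obtain ⟨r, rfl⟩ := Submodule.mem_one.mp hs
  exact RingHom.congr_fun h r

include h in
/-- Writing `1 = ∑ aᵢ bᵢ` with `aᵢ ∈ I` and `bᵢ ∈ I⁻¹`, the element is `∑ α aᵢ * β bᵢ`. -/
lemma exists_forall_mem_mul_eq (I : (Submodule R S)ˣ) :
    ∃ u : T, ∀ s ∈ (I : Submodule R S), u * β s = α s := by
  have one_mem : (1 : S) ∈ (I * I⁻¹ : Submodule R S) := I.mul_inv ▸ Submodule.one_le.mp le_rfl
  suffices ∃ u : T, ∀ s ∈ (I : Submodule R S), u * β s = α 1 * α s by simpa using this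
  refine Submodule.mul_induction_on
    (C := fun z => ∃ u : T, ∀ s ∈ (I : Submodule R S), u * β s = α z * α s) one_mem
    (fun a _ b hb => ⟨α a * β b, fun s hs => ?_⟩) ?_
  · have hsb : s * b ∈ (1 : Submodule R S) := I.mul_inv ▸ Submodule.mul_mem_mul hs hb
    have := map_eq_map_of_mem_one h hsb
    simp only [map_mul] at this ⊢
    linear_combination -α a * this
  · rintro x y ⟨u, hu⟩ ⟨v, hv⟩
    exact ⟨u + v, fun s hs => by rw [add_mul, hu s hs, hv s hs, map_add, add_mul]⟩

/-- The Amitsur cocycle of an invertible submodule `I` of `S`, relative to a pair of ring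
homomorphisms `α β : S → T` in place of the two inclusions `S → S ⊗[R] S`: the unique `u` with
`u * β s = α s` for all `s ∈ I`. -/
noncomputable def amitsurCocycle : (Submodule R S)ˣ →* Tˣ :=
  MonoidHom.toHomUnits
    { toFun I := (exists_forall_mem_mul_eq h I).choose
      map_one' := by
        refine eq_of_forall_mem_mul_eq β (1 : (Submodule R S)ˣ) fun s hs => ?_
        rw [(exists_forall_mem_mul_eq h 1).choose_spec s hs, one_mul, map_eq_map_of_mem_one h hs]
      map_mul' I J := by
        refine eq_of_forall_mem_mul_eq β (I * J) fun s hs => ?_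
        rw [(exists_forall_mem_mul_eq h (I * J)).choose_spec s hs]
        refine Submodule.mul_induction_on hs (fun a ha b hb => ?_) (fun x y hx hy => ?_)
        · rw [map_mul, map_mul, ← (exists_forall_mem_mul_eq h I).choose_spec a ha,
            ← (exists_forall_mem_mul_eq h J).choose_spec b hb, mul_mul_mul_comm]
        · rw [map_add, map_add, hx, hy, mul_add] }

lemma amitsurCocycle_mul_apply (I : (Submodule R S)ˣ) {s : S} (hs : s ∈ (I : Submodule R S)) :
    (amitsurCocycle h I : T) * β s = α s :=
  (exists_forall_mem_mul_eq h I).choose_spec s hs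

lemma amitsurCocycle_spanSingleton (a : Sˣ) :
    amitsurCocycle h (Units.map (Submodule.spanSingleton R).toMonoidHom a) =
      Units.map (α : S →* T) a / Units.map (β : S →* T) a := by
  rw [eq_div_iff_mul_eq']
  exact Units.ext (amitsurCocycle_mul_apply h _ (Submodule.mem_span_singleton_self (a : S)))

lemma le_one_of_amitsurCocycle_eq_one (hdesc : ∀ s, α s = β s → s ∈ (1 : Submodule R S))
    {I : (Submodule R S)ˣ} (hI : amitsurCocycle h I = 1) : (I : Submodule R S) ≤ 1 := fun s hs =>
  hdesc s <| by rw [← amitsurCocycle_mul_apply h I hs, hI, Units.val_one, one_mul]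

lemma amitsurCocycle_injective (hdesc : ∀ s, α s = β s → s ∈ (1 : Submodule R S)) :
    Function.Injective (amitsurCocycle h) := by
  refine (injective_iff_map_eq_one _).mpr fun I hI => Units.ext <|
    (le_one_of_amitsurCocycle_eq_one h hdesc hI).antisymm ?_
  have inv_le_one : ((I⁻¹ : (Submodule R S)ˣ) : Submodule R S) ≤ 1 :=
    le_one_of_amitsurCocycle_eq_one h hdesc (by rw [map_inv, hI, inv_one])
  calc (1 : Submodule R S) = I * I⁻¹ := I.mul_inv.symm
    _ ≤ I * 1 := mul_le_mul_right inv_le_one _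
    _ = I := mul_one _

lemma map_amitsurCocycle_eq_one {p : T →+* S} (hα : p.comp α = .id S) (hβ : p.comp β = .id S)
    (I : (Submodule R S)ˣ) : Units.map (p : T →* S) (amitsurCocycle h I) = 1 := by
  refine Units.ext <| eq_of_forall_mem_mul_eq (.id S) I fun s hs => ?_
  have := congrArg p (amitsurCocycle_mul_apply h I hs)
  rw [map_mul, ← RingHom.comp_apply, ← RingHom.comp_apply, hα, hβ] at this
  simpa using this

end AmitsurCocycle

section Conjugation

variable {R S T : Type*} [CommRing R] [CommRing S] [CommRing T] [Algebra R S]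
  {jR : R →+* R} {jS : S →+* S} (hj : ∀ r, jS (algebraMap R S r) = algebraMap R S (jR r))
  (hjS : Function.Involutive jS)

/-- The conjugate of a submodule of `S` by an involution `jS` extending `jR`. It is defined as a
preimage, which for an involution is also the image. -/
def conjSubmodule : Submodule R S →* Submodule R S where
  toFun I :=
    { carrier := jS ⁻¹' I
      add_mem' ha hb := by simpa using I.add_mem ha hb
      zero_mem' := by simp
      smul_mem' r s hs := by
        simpa [Algebra.smul_def, hj] using I.smul_mem (jR r) hs }
  map_one' := by
    ext s
    change jS s ∈ (1 : Submodule R S) ↔ s ∈ (1 : Submodule R S)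
    simp only [Submodule.mem_one]
    exact ⟨fun ⟨r, hr⟩ => ⟨jR r, by rw [← hj, hr, hjS]⟩, fun ⟨r, hr⟩ => ⟨jR r, by rw [← hj, hr]⟩⟩
  map_mul' I J := by
    refine le_antisymm (fun s hs => ?_) (Submodule.mul_le.mpr fun a ha b hb => ?_)
    · rw [← hjS s]
      refine Submodule.mul_induction_on hs (fun a ha b hb => ?_) (fun x y hx hy => ?_)
      · rw [map_mul]
        exact Submodule.mul_mem_mul (by simpa [hjS a] using ha) (by simpa [hjS b] using hb)
      · rw [map_add]
        exact Submodule.add_mem _ hx hy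
    · change jS (a * b) ∈ I * J
      rw [map_mul]
      exact Submodule.mul_mem_mul ha hb

lemma mem_conjSubmodule {I : Submodule R S} {s : S} : s ∈ conjSubmodule hj hjS I ↔ jS s ∈ I :=
  Iff.rfl

/-- An isomorphism of `X` with a submodule `I` of `S`, composed with `jS`, identifies the twist of
`X` with the conjugate of `I`. -/
noncomputable def twistEquivConjSubmodule {X : Type*} [AddCommGroup X] [Module R X]
    {I : Submodule R S} (e : X ≃ₗ[R] I) : Twist jR X ≃ₗ[R] conjSubmodule hj hjS I where
  toFun x := ⟨jS (e (show X from x)), (mem_conjSubmodule hj hjS).mpr <| by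
    rw [hjS]
    exact (e _).2⟩
  invFun s := (e.symm ⟨jS s, s.2⟩ : X)
  map_add' x y := Subtype.ext <| by
    change jS (e ((show X from x) + (show X from y))) = jS _ + jS _
    rw [map_add, Submodule.coe_add, map_add]
  map_smul' r x := Subtype.ext <| by
    change jS (e (jR r • (show X from x))) = r • jS _
    rw [map_smul, Submodule.coe_smul, Algebra.smul_def, map_mul, ← hj, hjS, ← Algebra.smul_def]
  left_inv _ := e.symm_apply_eq.mpr <| Subtype.ext (hjS _)
  right_inv s := Subtype.ext <| by
    simp only [LinearEquiv.apply_symm_apply, hjS _]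

lemma map_amitsurCocycle_eq_amitsurCocycle_conjSubmodule {α β : S →+* T}
    (h : α.comp (algebraMap R S) = β.comp (algebraMap R S)) {jT : T →+* T}
    (hα : ∀ s, jT (α s) = α (jS s)) (hβ : ∀ s, jT (β s) = β (jS s)) (I : (Submodule R S)ˣ) :
    Units.map (jT : T →* T) (amitsurCocycle h I) =
      amitsurCocycle h (Units.map (conjSubmodule hj hjS) I) := by
  refine Units.ext <| eq_of_forall_mem_mul_eq β (Units.map (conjSubmodule hj hjS) I) fun s hs => ?_
  have := congrArg jT (amitsurCocycle_mul_apply h I ((mem_conjSubmodule hj hjS).mp hs))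
  rw [map_mul, hα, hβ, hjS] at this
  rw [amitsurCocycle_mul_apply h _ hs]
  exact this

end Conjugation

section PicardGroup

open scoped TensorProduct

variable {R : Type*} [CommRing R] (X : Type*) [AddCommGroup X] [Module R X] [Module.Invertible R X]

lemma exists_unitsToPic_eq_mk {S : Type*} [CommRing S] [Algebra R S] [FaithfulSMul R S]
    (hX : Nonempty (S ⊗[R] X ≃ₗ[S] S)) :
    ∃ I : (Submodule R S)ˣ, Submodule.unitsToPic R S I = Pic.mk R X := by
  suffices Pic.mk R X ∈ (Submodule.unitsToPic R S).range from this
  rw [Submodule.range_unitsToPic]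
  exact Pic.mk_eq_one_iff.mpr
    ⟨TensorProduct.AlgebraTensorModule.congr (.refl S S) (Pic.mk.linearEquiv R X) ≪≫ₗ hX.some⟩

lemma nonempty_tensorPower_equiv_pic_pow (n : ℕ) :
    Nonempty (PiTensorProduct R (fun _ : Fin n => X) ≃ₗ[R] (Pic.mk R X ^ n : Pic R)) := by
  induction n with
  | zero =>
    rw [pow_zero]
    exact ⟨PiTensorProduct.isEmptyEquiv (Fin 0) ≪≫ₗ (Pic.mk_eq_iff.mp Pic.mk_self).some⟩
  | succ n ih =>
    have tensor_equiv : Nonempty ((Pic.mk R X ^ n : Pic R) ⊗[R] X ≃ₗ[R]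
        (Pic.mk R X ^ (n + 1) : Pic R)) := by
      rw [← Pic.mk_eq_iff, Pic.mk_tensor, Pic.mk_eq_self, pow_succ]
    exact ⟨(TensorPower.mulEquiv (R := R) (M := X) (n := n) (m := 1)).symm ≪≫ₗ
      TensorProduct.congr ih.some
        (PiTensorProduct.subsingletonEquiv (R := R) (s := fun _ : Fin 1 => X) 0) ≪≫ₗ
      tensor_equiv.some⟩

lemma pic_mk_pow_eq_one_iff {n : ℕ} :
    Pic.mk R X ^ n = 1 ↔ Nonempty (PiTensorProduct R (fun _ : Fin n => X) ≃ₗ[R] R) := by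
  have e := (nonempty_tensorPower_equiv_pic_pow (R := R) X n).some
  rw [← Pic.mk_self, eq_comm, Pic.mk_eq_iff]
  exact ⟨fun ⟨f⟩ => ⟨e ≪≫ₗ f.symm⟩, fun ⟨f⟩ => ⟨f.symm ≪≫ₗ e⟩⟩

end PicardGroup

section GroupRing

variable {A : Type*} [CommRing A] {H : Type*} [CommGroup H]

variable (A H) in
/-- The involution of a group ring induced by inversion on the group. -/
noncomputable abbrev inversion : MonoidAlgebra A H →+* MonoidAlgebra A H :=
  MonoidAlgebra.mapDomainRingHom A (invMonoidHom : H →* H)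

lemma inversion_involutive : Function.Involutive (inversion A H) :=
  RingHom.congr_fun (f := (inversion A H).comp (inversion A H)) (g := .id _) (by ext <;> simp)

lemma inversion_mapDomainRingHom {H' : Type*} [CommGroup H'] (f : H →* H')
    (x : MonoidAlgebra A H) :
    inversion A H' (MonoidAlgebra.mapDomainRingHom A f x) =
      MonoidAlgebra.mapDomainRingHom A f (inversion A H x) :=
  RingHom.congr_fun (f := (inversion A H').comp (MonoidAlgebra.mapDomainRingHom A f))
    (g := (MonoidAlgebra.mapDomainRingHom A f).comp (inversion A H)) (by ext <;> simp) x

lemma coeff_one_mul_inversion (w : MonoidAlgebra A H) :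
    (w * inversion A H w).coeff 1 = ∑ h ∈ w.coeff.support, w.coeff h * w.coeff h := by
  have coeff_inv (h : H) : (inversion A H w).coeff h⁻¹ = w.coeff h :=
    Finsupp.mapDomain_apply inv_injective w.coeff h
  simp only [MonoidAlgebra.coeff_mul_apply_left, mul_one, coeff_inv, Finsupp.sum]

lemma exists_eq_single_of_mul_inversion_eq_one (hA : SumSqIndecomposableOne A)
    {w : MonoidAlgebra A H} (hw : w * inversion A H w = 1) :
    ∃ h c, w = MonoidAlgebra.single h c := by
  have sum_sq : ∑ h ∈ w.coeff.support, w.coeff h * w.coeff h = 1 := by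
    rw [← coeff_one_mul_inversion, hw, MonoidAlgebra.coeff_one_one]
  have card_support : w.coeff.support.card ≤ 1 := by
    refine Finset.card_le_one.mpr fun h hh k hk => ?_
    by_contra hne
    exact (hA.eq_zero_or_eq_zero sum_sq hh hk hne).elim
      (Finsupp.mem_support_iff.mp hh) (Finsupp.mem_support_iff.mp hk)
  obtain ⟨h, c, hc⟩ := Finsupp.card_support_le_one'.mp card_support
  exact ⟨h, c, MonoidAlgebra.coeff_injective hc⟩

end GroupRing

section Induction

open MonoidAlgebra

variable {A : Type*} [CommRing A] {G : Type*} [CommGroup G] {G₀ : Subgroup G}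

/-- The `A[G₀]`-algebra structure of `A[G]` along which modules are induced. -/
noncomputable abbrev inducedAlgebra : Algebra (MonoidAlgebra A G₀) (MonoidAlgebra A G) :=
  (mapDomainRingHom A G₀.subtype).toAlgebra

attribute [local instance] inducedAlgebra

lemma faithfulSMul_induced : FaithfulSMul (MonoidAlgebra A G₀) (MonoidAlgebra A G) :=
  (faithfulSMul_iff_algebraMap_injective _ _).mpr (mapDomain_injective G₀.subtype_injective)

attribute [local instance] faithfulSMul_induced

variable (A G₀) in
/-- The map `s ↦ s ⊗ 1` from `S = A[G]` to `S ⊗ S`. The latter is the group ring of `G^{(2)}`,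
which is identified with `G × G ⧸ G₀` through `(x, y) ↦ (x * y, y)`. -/
noncomputable def cofaceLeft : MonoidAlgebra A G →+* MonoidAlgebra A (G × G ⧸ G₀) :=
  mapDomainRingHom A (MonoidHom.inl G (G ⧸ G₀))

variable (A G₀) in
/-- The map `s ↦ 1 ⊗ s` from `S = A[G]` to `S ⊗ S`, in the coordinates of `cofaceLeft`. -/
noncomputable def cofaceRight : MonoidAlgebra A G →+* MonoidAlgebra A (G × G ⧸ G₀) :=
  mapDomainRingHom A ((MonoidHom.id G).prod (QuotientGroup.mk' G₀))

variable (A G₀) in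
/-- The multiplication map from `S ⊗ S` to `S = A[G]`, in the coordinates of `cofaceLeft`. -/
noncomputable def codegeneracy : MonoidAlgebra A (G × G ⧸ G₀) →+* MonoidAlgebra A G :=
  mapDomainRingHom A (MonoidHom.fst G (G ⧸ G₀))

lemma cofaceLeft_comp_algebraMap :
    (cofaceLeft A G₀).comp (algebraMap (MonoidAlgebra A G₀) (MonoidAlgebra A G)) =
      (cofaceRight A G₀).comp (algebraMap (MonoidAlgebra A G₀) (MonoidAlgebra A G)) := by
  rw [RingHom.algebraMap_toAlgebra, cofaceLeft, cofaceRight, ← mapDomainRingHom_comp,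
    ← mapDomainRingHom_comp]
  congr 1
  ext g : 1
  exact Prod.ext rfl ((QuotientGroup.eq_one_iff _).mpr g.2).symm

lemma codegeneracy_comp_cofaceLeft : (codegeneracy A G₀).comp (cofaceLeft A G₀) = .id _ := by
  ext <;> simp [codegeneracy, cofaceLeft]

lemma codegeneracy_comp_cofaceRight : (codegeneracy A G₀).comp (cofaceRight A G₀) = .id _ := by
  ext <;> simp [codegeneracy, cofaceRight]

lemma support_subset_of_cofaceLeft_eq_cofaceRight {s : MonoidAlgebra A G}
    (hs : cofaceLeft A G₀ s = cofaceRight A G₀ s) : (s.coeff.support : Set G) ⊆ G₀ := by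
  intro g hg
  by_contra hgG₀
  have left : (cofaceLeft A G₀ s).coeff (g, (g : G ⧸ G₀)) = 0 := by
    refine Finsupp.mapDomain_of_notMem_range (f := MonoidHom.inl G (G ⧸ G₀)) s.coeff _ ?_
    rintro ⟨y, hy⟩
    exact hgG₀ ((QuotientGroup.eq_one_iff g).mp (congrArg Prod.snd hy).symm)
  have right : (cofaceRight A G₀ s).coeff (g, (g : G ⧸ G₀)) = s.coeff g :=
    Finsupp.mapDomain_apply (f := (MonoidHom.id G).prod (QuotientGroup.mk' G₀))
      (fun _ _ h => congrArg Prod.fst h) s.coeff g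
  exact Finsupp.mem_support_iff.mp hg (by rw [← right, ← hs, left])

lemma mem_one_of_cofaceLeft_eq_cofaceRight (s : MonoidAlgebra A G)
    (hs : cofaceLeft A G₀ s = cofaceRight A G₀ s) :
    s ∈ (1 : Submodule (MonoidAlgebra A G₀) (MonoidAlgebra A G)) := by
  refine Submodule.mem_one.mpr ⟨comapDomain G₀.subtype G₀.subtype_injective s, ?_⟩
  refine mapDomain_comapDomain ?_ _
  simpa using support_subset_of_cofaceLeft_eq_cofaceRight hs

lemma exists_unit_mul_cofaceLeft_eq (hA : SumSqIndecomposableOne A)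
    {w : MonoidAlgebra A (G × G ⧸ G₀)} (hw : w * inversion A _ w = 1)
    (hw' : codegeneracy A G₀ w = 1) :
    ∃ a : (MonoidAlgebra A G)ˣ, w * cofaceLeft A G₀ a = cofaceRight A G₀ a := by
  obtain ⟨⟨g, q⟩, c, rfl⟩ := exists_eq_single_of_mul_inversion_eq_one hA hw
  obtain ⟨k, rfl⟩ := QuotientGroup.mk_surjective q
  refine ⟨Units.map (of A G) (toUnits k), ?_⟩
  have w_eq : single (g, (k : G ⧸ G₀)) c = single (1, (k : G ⧸ G₀)) 1 * cofaceLeft A G₀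
      (codegeneracy A G₀ (single (g, (k : G ⧸ G₀)) c)) := by
    simp [cofaceLeft, codegeneracy]
  rw [w_eq, hw']
  simp [cofaceLeft, cofaceRight]

lemma inversion_algebraMap (r : MonoidAlgebra A G₀) :
    inversion A G (algebraMap _ _ r) = algebraMap _ _ (inversion A G₀ r) :=
  inversion_mapDomainRingHom G₀.subtype r

lemma inversion_cofaceLeft (s : MonoidAlgebra A G) :
    inversion A _ (cofaceLeft A G₀ s) = cofaceLeft A G₀ (inversion A G s) :=
  inversion_mapDomainRingHom _ s

lemma inversion_cofaceRight (s : MonoidAlgebra A G) :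
    inversion A _ (cofaceRight A G₀ s) = cofaceRight A G₀ (inversion A G s) :=
  inversion_mapDomainRingHom _ s

lemma unitsToPic_conjSubmodule (hA : SumSqIndecomposableOne A)
    (I : (Submodule (MonoidAlgebra A G₀) (MonoidAlgebra A G))ˣ) :
    Submodule.unitsToPic _ _ (Units.map (conjSubmodule inversion_algebraMap inversion_involutive) I)
      = Submodule.unitsToPic _ _ I := by
  set I' := Units.map (conjSubmodule inversion_algebraMap inversion_involutive) I
  let c := amitsurCocycle (cofaceLeft_comp_algebraMap (A := A) (G₀ := G₀))
  let j : (MonoidAlgebra A (G × G ⧸ G₀))ˣ →* (MonoidAlgebra A (G × G ⧸ G₀))ˣ :=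
    Units.map (inversion A (G × G ⧸ G₀))
  have j_c : j (c I) = c I' := map_amitsurCocycle_eq_amitsurCocycle_conjSubmodule
    inversion_algebraMap inversion_involutive cofaceLeft_comp_algebraMap
    inversion_cofaceLeft inversion_cofaceRight I
  have j_c' : j (c I') = c I := by
    rw [← j_c]
    exact Units.ext (inversion_involutive _)
  have mul_j : c (I / I') * j (c (I / I')) = 1 := by
    rw [map_div, map_div, j_c, j_c', div_mul_div_cancel, div_self']
  have codegeneracy_c : Units.map (codegeneracy A G₀ : _ →* MonoidAlgebra A G) (c (I / I')) = 1 :=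
    map_amitsurCocycle_eq_one cofaceLeft_comp_algebraMap codegeneracy_comp_cofaceLeft
      codegeneracy_comp_cofaceRight (I / I')
  obtain ⟨a, ha⟩ := exists_unit_mul_cofaceLeft_eq hA (congrArg Units.val mul_j)
    (congrArg Units.val codegeneracy_c)
  have principal : Units.map (Submodule.spanSingleton _).toMonoidHom a⁻¹ = I / I' := by
    refine amitsurCocycle_injective cofaceLeft_comp_algebraMap
      mem_one_of_cofaceLeft_eq_cofaceRight ?_
    rw [amitsurCocycle_spanSingleton, map_inv, map_inv, inv_div_inv, div_eq_iff_eq_mul]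
    exact Units.ext ha.symm
  have mem_ker : I / I' ∈ (Submodule.unitsToPic (MonoidAlgebra A G₀) (MonoidAlgebra A G)).ker := by
    rw [Submodule.ker_unitsToPic]
    exact ⟨a⁻¹, principal⟩
  exact (div_eq_one.mp ((map_div _ I I').symm.trans mem_ker)).symm

lemma pic_mk_sq_eq_one (hA : SumSqIndecomposableOne A) (X : Type*) [AddCommGroup X]
    [Module (MonoidAlgebra A G₀) X] [Module.Invertible (MonoidAlgebra A G₀) X]
    (hminus : Nonempty (TensorProduct (MonoidAlgebra A G₀) (Twist (inversion A G₀) X) X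
      ≃ₗ[MonoidAlgebra A G₀] MonoidAlgebra A G₀))
    (hind : Nonempty (TensorProduct (MonoidAlgebra A G₀) (MonoidAlgebra A G) X
      ≃ₗ[MonoidAlgebra A G] MonoidAlgebra A G)) :
    Pic.mk (MonoidAlgebra A G₀) X ^ 2 = 1 := by
  have : Module.Invertible (MonoidAlgebra A G₀) (Twist (inversion A G₀) X) := .left hminus.some
  obtain ⟨I, hI⟩ := exists_unitsToPic_eq_mk X hind
  have e : X ≃ₗ[MonoidAlgebra A G₀] I := (Pic.mk_eq_mk_iff.mp hI.symm).some
  have mk_twist : Pic.mk (MonoidAlgebra A G₀) (Twist (inversion A G₀) X) =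
      Pic.mk (MonoidAlgebra A G₀) X := by
    rw [← hI, ← unitsToPic_conjSubmodule hA]
    exact Pic.mk_eq_mk_iff.mpr ⟨twistEquivConjSubmodule inversion_algebraMap inversion_involutive e⟩
  calc Pic.mk (MonoidAlgebra A G₀) X ^ 2
      = Pic.mk (MonoidAlgebra A G₀) (Twist (inversion A G₀) X) * Pic.mk (MonoidAlgebra A G₀) X := by
        rw [mk_twist, sq]
    _ = 1 := by rw [← Pic.mk_tensor, Pic.mk_eq_one_iff.mpr hminus]

theorem stmt_16_general (hA : SumSqIndecomposableOne A) (X : Type*) [AddCommGroup X]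
    [Module (MonoidAlgebra A G₀) X] [Module.Invertible (MonoidAlgebra A G₀) X]
    {n : ℕ} (hn : Odd n)
    (hodd_order : Nonempty (PiTensorProduct (MonoidAlgebra A G₀) (fun _ : Fin n => X)
      ≃ₗ[MonoidAlgebra A G₀] MonoidAlgebra A G₀))
    (hminus : Nonempty (TensorProduct (MonoidAlgebra A G₀) (Twist (inversion A G₀) X) X
      ≃ₗ[MonoidAlgebra A G₀] MonoidAlgebra A G₀))
    (hind : Nonempty (TensorProduct (MonoidAlgebra A G₀) (MonoidAlgebra A G) X
      ≃ₗ[MonoidAlgebra A G] MonoidAlgebra A G)) :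
    Nonempty (X ≃ₗ[MonoidAlgebra A G₀] MonoidAlgebra A G₀) := by
  rw [← Pic.mk_eq_one_iff, ← orderOf_eq_one_iff]
  have dvd_two := orderOf_dvd_of_pow_eq_one (pic_mk_sq_eq_one hA X hminus hind)
  have dvd_n := orderOf_dvd_of_pow_eq_one ((pic_mk_pow_eq_one_iff X).mpr hodd_order)
  exact Nat.eq_one_of_dvd_coprimes hn.coprime_two_left dvd_two dvd_n

end Induction

/-- let G be a finite abelian group of odd order, G₀ ≤ G, K a totally
real number field, R = O_K[G₀] and S = O_K[G].  Then induction on the odd minus parts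
Pic(R)⁻ → Pic(S)⁻ is injective: if X is an invertible R-module whose class has odd
order and lies in the minus part for the inversion involution j, and S ⊗_R X is free,
then X is free. -/
theorem stmt_16 (K : Type*) [Field K] [NumberField K] (hK : IsTotallyRealNF K)
    (G : Type*) [CommGroup G] [Fintype G] (hodd : Odd (Fintype.card G))
    (G₀ : Subgroup G)
    (X : Type*) [AddCommGroup X] [Module (MonoidAlgebra (𝓞 K) ↥G₀) X]
    (hproj : Module.Projective (MonoidAlgebra (𝓞 K) ↥G₀) X)
    (hfin : Module.Finite (MonoidAlgebra (𝓞 K) ↥G₀) X)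
    -- X is invertible (represents a class in Pic(R))
    (Y : Type*) [AddCommGroup Y] [Module (MonoidAlgebra (𝓞 K) ↥G₀) Y]
    (hinv : Nonempty ((TensorProduct (MonoidAlgebra (𝓞 K) ↥G₀) X Y)
      ≃ₗ[MonoidAlgebra (𝓞 K) ↥G₀] MonoidAlgebra (𝓞 K) ↥G₀))
    -- the class of X has odd order
    (n : ℕ) (hn : Odd n)
    (hodd_order : Nonempty ((PiTensorProduct (MonoidAlgebra (𝓞 K) ↥G₀)
        (fun _ : Fin n => X)) ≃ₗ[MonoidAlgebra (𝓞 K) ↥G₀] MonoidAlgebra (𝓞 K) ↥G₀))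
    -- the class of X lies in the minus part: j_*[X] = -[X]
    (hminus : Nonempty ((TensorProduct (MonoidAlgebra (𝓞 K) ↥G₀)
        (Twist (MonoidAlgebra.mapDomainRingHom (𝓞 K) (invMonoidHom : ↥G₀ →* ↥G₀)) X) X)
      ≃ₗ[MonoidAlgebra (𝓞 K) ↥G₀] MonoidAlgebra (𝓞 K) ↥G₀))
    -- induction to G kills the class of X
    (hind : letI : Algebra (MonoidAlgebra (𝓞 K) ↥G₀) (MonoidAlgebra (𝓞 K) G) :=
        (MonoidAlgebra.mapDomainRingHom (𝓞 K) G₀.subtype).toAlgebra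
      Nonempty ((TensorProduct (MonoidAlgebra (𝓞 K) ↥G₀) (MonoidAlgebra (𝓞 K) G) X)
        ≃ₗ[MonoidAlgebra (𝓞 K) G] MonoidAlgebra (𝓞 K) G)) :
    -- then X is already free
    Nonempty (X ≃ₗ[MonoidAlgebra (𝓞 K) ↥G₀] MonoidAlgebra (𝓞 K) ↥G₀) := by
  have := isTotallyReal_of_isTotallyRealNF hK
  have : Module.Invertible (MonoidAlgebra (𝓞 K) ↥G₀) X := .left hinv.some
  exact stmt_16_general (sumSqIndecomposableOne_ringOfIntegers K) X hn hodd_order hminus hind
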